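/- Let X^i_α : ℝ^p × ℝ^n → ℝ be smooth. A smooth map x : ℝ^p → ℝ^n is an extremal of the Lagrangian L = ½ h^{αβ} g_{ij} (x^i_α − X^i_α)(x^j_β − X^j_β) √|det h| if and only if it satisfies the generalized Poisson system h^{αβ} x^i_{αβ} = g^{ih} h^{αβ} g_{kj} (∇_h X^k_α) X^j_β + h^{αβ} F_j{}^i{}_α x^j_β + h^{αβ} D_β X^i_α for all i (all quantities depending on (t,x) evaluated at (t, x(t))). -/

import Mathlib

/-!
Write `y = ∂x - X`, `W = h⁻¹` and `S = √|det h|`. The derivatives of the Lagrangian are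
`∂L/∂x^k = S W^{αβ} (½ ∂_k g_{ij} y^i_α y^j_β - g_{ij} ∂_k X^i_α y^j_β)` and
`∂L/∂x^k_α = S W^{αβ} g_{kj} y^j_β` (`fderiv_lagrangian_pos`, `fderiv_lagrangian_vel`).
In the total divergence of the momenta (`divergence_momentum`) the derivative of the density is
`∂_α (S W^{αβ}) = -S W^{αγ} H^β_{αγ}` (`divergence_density`), a consequence of Jacobi's formula
and of the derivative of the matrix inverse.

On the other side, let `P^i` be the difference of the two sides of the Poisson system. Lowering
its index with `g` (`lower_poissonTerm`) turns the Christoffel symbols of `g` into those of the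
first kind, and `Γ_{m,lj} + Γ_{j,lm} = ∂_l g_{mj}` then identifies, after symmetrization in
`(α, β)`, the Euler–Lagrange expression with `-S g_{ki} P^i` (`elTerm_symm`). Since `S ≠ 0` and
`g` is invertible, one vanishes exactly when the other does.
-/

open scoped BigOperators

noncomputable section

/-- Partial derivative of `f : ℝ^m → ℝ` at `t` in the `α`-th coordinate direction. -/
def pd {m : ℕ} (α : Fin m) (f : (Fin m → ℝ) → ℝ) (t : Fin m → ℝ) : ℝ :=
  fderiv ℝ f t (Pi.single α 1)

/-- Componentwise inverse of a square array of reals (matrix inversion). -/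
def minv {m : ℕ} (A : Fin m → Fin m → ℝ) : Fin m → Fin m → ℝ :=
  fun i j => (Matrix.of A)⁻¹ i j

/-- `√|det h(t)|`, the volume density of the metric `h`. -/
def sqrtDet {p : ℕ} (h : (Fin p → ℝ) → Fin p → Fin p → ℝ) (t : Fin p → ℝ) : ℝ :=
  Real.sqrt |(Matrix.of (h t)).det|

/-- First jet `x^i_α = ∂x^i/∂t^α` of a map `x : ℝ^p → ℝ^n`. -/
def jet {p n : ℕ} (x : (Fin p → ℝ) → Fin n → ℝ) (t : Fin p → ℝ) :
    Fin n → Fin p → ℝ :=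
  fun i α => pd α (fun s => x s i) t

/-- Christoffel symbols `G^i_{jk} = ½ g^{il}(∂g_{lj}/∂x^k + ∂g_{lk}/∂x^j − ∂g_{jk}/∂x^l)`. -/
def christoffel {m : ℕ} (g : (Fin m → ℝ) → Fin m → Fin m → ℝ)
    (i j k : Fin m) (q : Fin m → ℝ) : ℝ :=
  (1 / 2) * ∑ l, minv (g q) i l *
    (pd k (fun y => g y l j) q + pd j (fun y => g y l k) q - pd l (fun y => g y j k) q)

/-- Covariant second jet
`x^i_{αβ} = ∂²x^i/∂t^α∂t^β − H^γ_{αβ} x^i_γ + G^i_{jk} x^j_α x^k_β`. -/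
def covHess {p n : ℕ} (h : (Fin p → ℝ) → Fin p → Fin p → ℝ)
    (g : (Fin n → ℝ) → Fin n → Fin n → ℝ)
    (x : (Fin p → ℝ) → Fin n → ℝ) (i : Fin n) (α β : Fin p) (t : Fin p → ℝ) : ℝ :=
  pd α (fun s => jet x s i β) t
    - (∑ γ, christoffel h γ α β t * jet x t i γ)
    + ∑ j, ∑ k, christoffel g i j k (x t) * jet x t j α * jet x t k β

/-- `∇_j X^i_α = ∂X^i_α/∂x^j + G^i_{jk} X^k_α`. -/
def nablaX {p n : ℕ} (g : (Fin n → ℝ) → Fin n → Fin n → ℝ)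
    (X : Fin n → Fin p → (Fin p → ℝ) → (Fin n → ℝ) → ℝ)
    (j i : Fin n) (α : Fin p) (t : Fin p → ℝ) (q : Fin n → ℝ) : ℝ :=
  pd j (fun y => X i α t y) q + ∑ k, christoffel g i j k q * X k α t q

/-- `D_β X^i_α = ∂X^i_α/∂t^β − H^γ_{βα} X^i_γ`. -/
def Dt {p n : ℕ} (h : (Fin p → ℝ) → Fin p → Fin p → ℝ)
    (X : Fin n → Fin p → (Fin p → ℝ) → (Fin n → ℝ) → ℝ)
    (β : Fin p) (i : Fin n) (α : Fin p) (t : Fin p → ℝ) (q : Fin n → ℝ) : ℝ :=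
  pd β (fun s => X i α s q) t - ∑ γ, christoffel h γ β α t * X i γ t q

/-- External tensor `F_j{}^i{}_α = ∇_j X^i_α − g_{hj} g^{ik} ∇_k X^h_α`. -/
def Fext {p n : ℕ} (g : (Fin n → ℝ) → Fin n → Fin n → ℝ)
    (X : Fin n → Fin p → (Fin p → ℝ) → (Fin n → ℝ) → ℝ)
    (j i : Fin n) (α : Fin p) (t : Fin p → ℝ) (q : Fin n → ℝ) : ℝ :=
  nablaX g X j i α t q
    - ∑ h', ∑ k, g q h' j * minv (g q) i k * nablaX g X k h' α t q

/-- Potential energy `f = ½ h^{αβ} g_{ij} X^i_α X^j_β`. -/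
def potE {p n : ℕ} (h : (Fin p → ℝ) → Fin p → Fin p → ℝ)
    (g : (Fin n → ℝ) → Fin n → Fin n → ℝ)
    (X : Fin n → Fin p → (Fin p → ℝ) → (Fin n → ℝ) → ℝ)
    (t : Fin p → ℝ) (q : Fin n → ℝ) : ℝ :=
  (1 / 2) * ∑ α, ∑ β, ∑ i, ∑ j, minv (h t) α β * g q i j * X i α t q * X j β t q

/-- A map `x` is an extremal of the first-order Lagrangian `L = L(t, x, x_·)` iff it
satisfies the Euler–Lagrange equations
`∂L/∂x^k − (d/dt^α)(∂L/∂x^k_α) = 0` along the first jet of `x`. -/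
def IsExtremal {p n : ℕ}
    (L : (Fin p → ℝ) → (Fin n → ℝ) → (Fin n → Fin p → ℝ) → ℝ)
    (x : (Fin p → ℝ) → Fin n → ℝ) : Prop :=
  ∀ (t : Fin p → ℝ) (k : Fin n),
    fderiv ℝ (fun q => L t q (jet x t)) (x t) (Pi.single k 1)
      - (∑ α, pd α
          (fun s => fderiv ℝ (fun v => L s (x s) v) (jet x s)
            (Pi.single k (Pi.single α 1))) t) = 0


/-! ### Directional derivatives -/

/-- `f` is differentiable at `x` and its derivative in the direction `w` is `d`. -/
def HasDir {E : Type*} [NormedAddCommGroup E] [NormedSpace ℝ E]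
    (f : E → ℝ) (x w : E) (d : ℝ) : Prop :=
  DifferentiableAt ℝ f x ∧ fderiv ℝ f x w = d

namespace HasDir

variable {E : Type*} [NormedAddCommGroup E] [NormedSpace ℝ E] {x w : E}

lemma of_diff {f : E → ℝ} (hf : DifferentiableAt ℝ f x) : HasDir f x w (fderiv ℝ f x w) :=
  ⟨hf, rfl⟩

lemma of_hasFDerivAt {f : E → ℝ} {f' : E →L[ℝ] ℝ} (hf : HasFDerivAt f f' x) :
    HasDir f x w (f' w) :=
  ⟨hf.differentiableAt, by rw [hf.fderiv]⟩

lemma const (c : ℝ) : HasDir (fun _ : E => c) x w 0 :=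
  of_hasFDerivAt (hasFDerivAt_const c x)

lemma congr_val {f : E → ℝ} {a b : ℝ} (hf : HasDir f x w a) (hab : a = b) : HasDir f x w b :=
  hab ▸ hf

lemma add {f g : E → ℝ} {a b : ℝ} (hf : HasDir f x w a) (hg : HasDir g x w b) :
    HasDir (fun y => f y + g y) x w (a + b) := by
  have := of_hasFDerivAt (w := w) (hf.1.hasFDerivAt.fun_add hg.1.hasFDerivAt)
  simpa [hf.2, hg.2] using this

lemma sub {f g : E → ℝ} {a b : ℝ} (hf : HasDir f x w a) (hg : HasDir g x w b) :
    HasDir (fun y => f y - g y) x w (a - b) := by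
  have := of_hasFDerivAt (w := w) (hf.1.hasFDerivAt.fun_sub hg.1.hasFDerivAt)
  simpa [hf.2, hg.2] using this

lemma mul {f g : E → ℝ} {a b : ℝ} (hf : HasDir f x w a) (hg : HasDir g x w b) :
    HasDir (fun y => f y * g y) x w (a * g x + f x * b) := by
  have := of_hasFDerivAt (w := w) (hf.1.hasFDerivAt.fun_mul hg.1.hasFDerivAt)
  refine this.congr_val ?_
  simp [hf.2, hg.2]
  ring

lemma sum {ι : Type*} {s : Finset ι} {f : ι → E → ℝ} {a : ι → ℝ}
    (hf : ∀ i, HasDir (f i) x w (a i)) :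
    HasDir (fun y => ∑ i ∈ s, f i y) x w (∑ i ∈ s, a i) := by
  have := of_hasFDerivAt (w := w) (HasFDerivAt.fun_sum (u := s) fun i _ => (hf i).1.hasFDerivAt)
  refine this.congr_val ?_
  simp [(hf _).2]

lemma prod {ι : Type*} [DecidableEq ι] {s : Finset ι} {f : ι → E → ℝ} {a : ι → ℝ}
    (hf : ∀ i, HasDir (f i) x w (a i)) :
    HasDir (fun y => ∏ i ∈ s, f i y) x w (∑ i ∈ s, (∏ j ∈ s.erase i, f j x) * a i) := by
  have := of_hasFDerivAt (w := w) (HasFDerivAt.finsetProd (u := s) fun i _ => (hf i).1.hasFDerivAt)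
  refine this.congr_val ?_
  simp [(hf _).2]

end HasDir

/-- The chain rule along the graph of `x`, in coordinates. -/
lemma hasDir_graph {E : Type*} [NormedAddCommGroup E] [NormedSpace ℝ E] {n : ℕ}
    {F : E → (Fin n → ℝ) → ℝ} {x : E → Fin n → ℝ} {t w : E}
    (hF : Differentiable ℝ fun z : E × (Fin n → ℝ) => F z.1 z.2)
    (hx : Differentiable ℝ x) :
    HasDir (fun s => F s (x s)) t w
      (fderiv ℝ (fun s => F s (x t)) t w
        + ∑ l, pd l (fun y => F t y) (x t) * fderiv ℝ (fun s => x s l) t w) := by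
  have hF' := (hF (t, x t)).hasFDerivAt
  have h0 : HasFDerivAt (fun s => F s (x s)) _ t :=
    HasFDerivAt.comp (f := fun s => (s, x s)) t hF' ((hasFDerivAt_id t).prodMk (hx t).hasFDerivAt)
  have h1 : HasFDerivAt (fun s => F s (x t)) _ t :=
    HasFDerivAt.comp (f := fun s => (s, x t)) t hF'
      ((hasFDerivAt_id t).prodMk (hasFDerivAt_const (x t) t))
  have h2 : HasFDerivAt (fun y => F t y) _ (x t) :=
    HasFDerivAt.comp (f := fun y => (t, y)) (x t) hF'
      ((hasFDerivAt_const t (x t)).prodMk (hasFDerivAt_id (x t)))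
  refine (HasDir.of_hasFDerivAt h0).congr_val ?_
  have hxl : ∀ l, fderiv ℝ (fun s => x s l) t w = fderiv ℝ x t w l := fun l => by
    rw [((hasFDerivAt_pi'.1 (hx t).hasFDerivAt) l).fderiv]; rfl
  set D := fderiv ℝ (fun z : E × (Fin n → ℝ) => F z.1 z.2) (t, x t) with hD
  set v := fderiv ℝ x t w with hv
  have hsum : v = ∑ l, v l • (Pi.single l (1 : ℝ) : Fin n → ℝ) := by
    ext i; simp [Finset.sum_apply, Pi.single_apply]
  have e0 : ∀ (a : E) (b : Fin n → ℝ), D (a, b) = D (a, 0) + D (0, b) := fun a b => by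
    rw [← map_add]; simp
  have e1 : D (0, v) = ∑ l, D (0, Pi.single l 1) * v l := by
    have : D (0, v) = (D.comp (ContinuousLinearMap.inr ℝ E (Fin n → ℝ))) v := by simp
    rw [this]
    conv_lhs => rw [hsum]
    rw [map_sum]
    refine Finset.sum_congr rfl fun l _ => ?_
    rw [map_smul]; simp [mul_comm]
  simp only [pd, hxl, h1.fderiv, h2.fderiv]
  simp only [ContinuousLinearMap.comp_apply, ContinuousLinearMap.prod_apply,
    ContinuousLinearMap.id_apply, zero_apply]
  rw [e0, e1]

/-! ### Inverse metric and volume density -/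

section Metric

variable {m : ℕ}

lemma minv_symm {A : Fin m → Fin m → ℝ} (hA : ∀ i j, A i j = A j i) (i j : Fin m) :
    minv A i j = minv A j i := by
  have h1 : (Matrix.of A).transpose = Matrix.of A := by ext a b; simp [hA a b]
  have h2 : ((Matrix.of A)⁻¹).transpose = (Matrix.of A)⁻¹ := by
    rw [Matrix.transpose_nonsing_inv, h1]
  exact congrFun (congrFun h2 j) i

lemma mul_minv {A : Fin m → Fin m → ℝ} (hA : (Matrix.of A).det ≠ 0) (i j : Fin m) :
    ∑ l, A i l * minv A l j = if i = j then 1 else 0 := by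
  have h1 := Matrix.mul_nonsing_inv (Matrix.of A) (isUnit_iff_ne_zero.2 hA)
  have := congrFun (congrFun h1 i) j
  simpa [Matrix.mul_apply, Matrix.one_apply, minv] using this

lemma minv_mul {A : Fin m → Fin m → ℝ} (hA : (Matrix.of A).det ≠ 0) (i j : Fin m) :
    ∑ l, minv A i l * A l j = if i = j then 1 else 0 := by
  have h1 := Matrix.nonsing_inv_mul (Matrix.of A) (isUnit_iff_ne_zero.2 hA)
  have := congrFun (congrFun h1 i) j
  simpa [Matrix.mul_apply, Matrix.one_apply, minv] using this

variable {E : Type*} [NormedAddCommGroup E] [NormedSpace ℝ E] {t w : E}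

/-- Jacobi's formula, with the cofactors written through the adjugate. -/
lemma hasDir_det {A : E → Fin m → Fin m → ℝ} {A' : Fin m → Fin m → ℝ}
    (hA : ∀ i j, HasDir (fun s => A s i j) t w (A' i j)) :
    HasDir (fun s => (Matrix.of (A s)).det) t w
      (∑ i, ∑ j, (Matrix.of (A t)).adjugate i j * A' j i) := by
  simp only [Matrix.det_apply']
  refine (HasDir.sum fun σ : Equiv.Perm (Fin m) => (HasDir.const _).mul
    (HasDir.prod fun i => hA (σ i) i)).congr_val ?_
  have key : ∀ i, ∑ j, (Matrix.of (A t)).adjugate i j * A' j i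
      = ∑ σ : Equiv.Perm (Fin m), ((Equiv.Perm.sign σ : ℤ) : ℝ) *
        ((∏ j ∈ Finset.univ.erase i, A t (σ j) j) * A' (σ i) i) := by
    intro i
    have h1 : ∑ j, (Matrix.of (A t)).adjugate i j * A' j i
        = ((Matrix.of (A t)).updateCol i fun j => A' j i).det := by
      rw [← Matrix.cramer_apply, Matrix.cramer_eq_adjugate_mulVec]; rfl
    rw [h1, Matrix.det_apply']
    refine Finset.sum_congr rfl fun σ _ => ?_
    congr 1
    rw [← Finset.prod_erase_mul _ _ (Finset.mem_univ i)]
    congr 1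
    · refine Finset.prod_congr rfl fun j hj => ?_
      simp [(Finset.mem_erase.1 hj).1]
    · simp
  simp only [key]
  rw [Finset.sum_comm]
  refine Finset.sum_congr rfl fun σ _ => ?_
  simp [Finset.mul_sum]

lemma differentiableAt_minv {A : E → Fin m → Fin m → ℝ}
    (hA : ∀ i j, DifferentiableAt ℝ (fun s => A s i j) t)
    (hdet : (Matrix.of (A t)).det ≠ 0) (i j : Fin m) :
    DifferentiableAt ℝ (fun s => minv (A s) i j) t := by
  have h1 : DifferentiableAt ℝ (fun s => (Matrix.of (A s)).det) t :=
    (hasDir_det (w := 0) fun a b => HasDir.of_diff (hA a b)).1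
  have h2 : DifferentiableAt ℝ (fun s => (Matrix.of (A s)).adjugate i j) t := by
    simp only [Matrix.adjugate_apply]
    refine (hasDir_det (w := 0)
      (A := fun s => (Matrix.of (A s)).updateRow j (Pi.single i 1)) fun a b =>
      HasDir.of_diff ?_).1
    by_cases hab : a = j
    · subst hab; simp
    · simpa [Matrix.updateRow_apply, hab] using hA a b
  have h3 : (fun s => minv (A s) i j)
      = fun s => ((Matrix.of (A s)).det)⁻¹ * (Matrix.of (A s)).adjugate i j := by
    funext s
    simp [minv, Matrix.inv_def]
  rw [h3]
  exact (h1.inv hdet).mul h2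

lemma hasDir_minv {A : E → Fin m → Fin m → ℝ} {A' : Fin m → Fin m → ℝ}
    (hA : ∀ i j, HasDir (fun s => A s i j) t w (A' i j))
    (hdet : ∀ s, (Matrix.of (A s)).det ≠ 0) (i j : Fin m) :
    HasDir (fun s => minv (A s) i j) t w
      (-∑ a, ∑ b, minv (A t) i a * A' a b * minv (A t) b j) := by
  have hd := fun i j => HasDir.of_diff (w := w)
    (differentiableAt_minv (fun i j => (hA i j).1) (hdet t) i j)
  refine (hd i j).congr_val ?_
  set B' : Fin m → Fin m → ℝ := fun i j => fderiv ℝ (fun s => minv (A s) i j) t w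
  -- differentiate `A⁻¹ A = 1`
  have h0 : ∀ b, ∑ a, (B' i a * A t a b + minv (A t) i a * A' a b) = 0 := by
    intro b
    have h1 := HasDir.sum (s := Finset.univ) fun a => (hd i a).mul (hA a b)
    simp only [minv_mul (hdet _)] at h1
    exact h1.2.symm.trans (by simp)
  have h2 : B' i j = ∑ b, (∑ a, B' i a * A t a b) * minv (A t) b j := by
    simp only [Finset.sum_mul]
    rw [Finset.sum_comm]
    simp only [mul_assoc, ← Finset.mul_sum, mul_minv (hdet t)]
    simp
  change B' i j = _
  rw [h2, Finset.sum_comm, ← Finset.sum_neg_distrib]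
  refine Finset.sum_congr rfl fun b _ => ?_
  have h3 := h0 b
  rw [Finset.sum_add_distrib] at h3
  rw [← Finset.sum_mul]
  linear_combination minv (A t) b j * h3

lemma hasDir_sqrtDet {p : ℕ} {h : (Fin p → ℝ) → Fin p → Fin p → ℝ} {t w : Fin p → ℝ}
    {A' : Fin p → Fin p → ℝ}
    (hA : ∀ i j, HasDir (fun s => h s i j) t w (A' i j))
    (hdet : (Matrix.of (h t)).det ≠ 0) :
    HasDir (sqrtDet h) t w
      ((1 / 2) * sqrtDet h t * ∑ i, ∑ j, minv (h t) i j * A' j i) := by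
  have h1 := hasDir_det hA
  have h2 := HasDir.of_hasFDerivAt (w := w) ((h1.1.hasFDerivAt.abs hdet).sqrt (abs_ne_zero.2 hdet))
  refine HasDir.congr_val h2 ?_
  have h4 : ∑ i, ∑ j, minv (h t) i j * A' j i = ((Matrix.of (h t)).det)⁻¹ *
      ∑ i, ∑ j, (Matrix.of (h t)).adjugate i j * A' j i := by
    simp [minv, Matrix.inv_def, Finset.mul_sum, mul_assoc]
  rw [h4, ← h1.2]
  set d := (Matrix.of (h t)).det with hd
  have hs : 0 < Real.sqrt |d| := Real.sqrt_pos.2 (abs_pos.2 hdet)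
  have hsq : Real.sqrt |d| * Real.sqrt |d| = |d| := Real.mul_self_sqrt (abs_nonneg d)
  have hsg : (SignType.sign d : ℝ) * d = |d| := sign_mul_self d
  have e : (1 / (2 * Real.sqrt |d|)) * (SignType.sign d : ℝ) = (1 / 2) * Real.sqrt |d| * d⁻¹ := by
    field_simp
    rw [hsg, sq, hsq]
  simp only [smul_apply, smul_eq_mul, sqrtDet]
  rw [← mul_assoc, ← mul_assoc, e]

end Metric

/-! ### Divergence of the densitized inverse metric -/

lemma christoffel_symm {m : ℕ} {g : (Fin m → ℝ) → Fin m → Fin m → ℝ}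
    (gsymm : ∀ q i j, g q i j = g q j i) (i j k : Fin m) (q : Fin m → ℝ) :
    christoffel g i j k q = christoffel g i k j q := by
  simp only [christoffel]
  congr 1
  refine Finset.sum_congr rfl fun l _ => ?_
  have e : (fun y => g y j k) = fun y => g y k j := funext fun y => gsymm y j k
  rw [e]; ring

/-- `∂_α(√|det h| h^{αβ}) = -√|det h| h^{αγ} H^β_{αγ}`. -/
lemma divergence_density {p : ℕ} {h : (Fin p → ℝ) → Fin p → Fin p → ℝ}
    (hsymm : ∀ t α β, h t α β = h t β α)
    (hdiff : ∀ α β, Differentiable ℝ fun t => h t α β)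
    (hdet : ∀ t, (Matrix.of (h t)).det ≠ 0) (t : Fin p → ℝ) (β : Fin p) :
    ∑ α, pd α (fun s => sqrtDet h s * minv (h s) α β) t
      = -(sqrtDet h t * ∑ α, ∑ γ, minv (h t) α γ * christoffel h β α γ t) := by
  have hA : ∀ α a b, HasDir (fun s => h s a b) t (Pi.single α 1) (pd α (fun s => h s a b) t) :=
    fun α a b => HasDir.of_diff (hdiff a b t)
  have hval : ∀ α, pd α (fun s => sqrtDet h s * minv (h s) α β) t = _ := fun α =>
    ((hasDir_sqrtDet (hA α) (hdet t)).mul (hasDir_minv (hA α) hdet α β)).2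
  set D : Fin p → Fin p → Fin p → ℝ := fun c a b => pd c (fun s => h s a b) t with hD
  have hDs : ∀ c a b, D c a b = D c b a := fun c a b => by
    simp only [hD]
    congr 1
    exact funext fun y => hsymm y a b
  have hi : ∀ a b, minv (h t) a b = minv (h t) b a := minv_symm (hsymm t)
  set W := minv (h t) with hW
  set S := sqrtDet h t
  -- both sides in terms of the two independent contractions of `h^{..} h^{..} ∂h_{..}`
  set T1 := ∑ α, ∑ a, ∑ b, W α β * (W a b * D α b a) with hT1
  set T2 := ∑ α, ∑ a, ∑ b, W α a * D α a b * W b β with hT2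
  have e1 : ∑ α, pd α (fun s => sqrtDet h s * minv (h s) α β) t = S * (1 / 2 * T1 - T2) := by
    have : ∀ α, pd α (fun s => sqrtDet h s * minv (h s) α β) t
        = S * (1 / 2 * (∑ a, ∑ b, W α β * (W a b * D α b a))
          - ∑ a, ∑ b, W α a * D α a b * W b β) := by
      intro α
      rw [hval]
      simp only [← Finset.mul_sum]
      ring
    simp only [this, ← Finset.mul_sum, Finset.sum_sub_distrib, hT1, hT2]
  have e2 : ∑ α, ∑ γ, W α γ * christoffel h β α γ t = T2 - 1 / 2 * T1 := by
    have f1 : ∑ α, ∑ γ, ∑ l, W α γ * (W β l * D γ l α) = T2 := by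
      rw [Finset.sum_comm, hT2]
      refine Finset.sum_congr rfl fun α _ => Finset.sum_congr rfl fun a _ =>
        Finset.sum_congr rfl fun b _ => ?_
      rw [hi a α, hi β b, hDs α b a]; ring
    have f2 : ∑ α, ∑ γ, ∑ l, W α γ * (W β l * D α l γ) = T2 := by
      rw [hT2]
      refine Finset.sum_congr rfl fun α _ => Finset.sum_congr rfl fun a _ =>
        Finset.sum_congr rfl fun b _ => ?_
      rw [hi β b, hDs α b a]; ring
    have f3 : ∑ α, ∑ γ, ∑ l, W α γ * (W β l * D l α γ) = T1 := by
      rw [hT1, Finset.sum_congr rfl fun α _ => Finset.sum_comm, Finset.sum_comm]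
      refine Finset.sum_congr rfl fun α _ => Finset.sum_congr rfl fun a _ =>
        Finset.sum_congr rfl fun b _ => ?_
      rw [hi β α, hDs α b a]; ring
    calc ∑ α, ∑ γ, W α γ * christoffel h β α γ t
        = ∑ α, ∑ γ, ∑ l, (1 / 2 * (W α γ * (W β l * D γ l α))
          + 1 / 2 * (W α γ * (W β l * D α l γ)) - 1 / 2 * (W α γ * (W β l * D l α γ))) := by
          refine Finset.sum_congr rfl fun α _ => Finset.sum_congr rfl fun γ _ => ?_
          simp only [christoffel, Finset.mul_sum]
          refine Finset.sum_congr rfl fun l _ => ?_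
          simp only [hD, hW]; ring
      _ = 1 / 2 * T2 + 1 / 2 * T2 - 1 / 2 * T1 := by
          simp only [Finset.sum_add_distrib, Finset.sum_sub_distrib, ← Finset.mul_sum]
          simp only [← Finset.mul_sum] at f1 f2 f3
          rw [f1, f2, f3]
      _ = _ := by ring
  rw [e1, e2]; ring

/-! ### Index algebra -/

/-- Two double sums agree if their symmetrized summands do. -/
lemma sum_symm {m : ℕ} {T T' : Fin m → Fin m → ℝ}
    (hT : ∀ j l, T j l + T l j = T' j l + T' l j) : ∑ j, ∑ l, T j l = ∑ j, ∑ l, T' j l := by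
  have key : ∀ U : Fin m → Fin m → ℝ, ∑ j, ∑ l, (U j l + U l j) = 2 * ∑ j, ∑ l, U j l := by
    intro U
    simp only [Finset.sum_add_distrib]
    rw [Finset.sum_comm (f := fun j l => U l j)]; ring
  have h1 := key T
  simp only [hT, key T'] at h1
  linarith

/-- The `i`-th component of the difference of the two sides of the Poisson system, before
contraction with `h^{αβ}`. Here `G` is the Christoffel symbol of `g`, `gi` the inverse of `g`,
`u = x_α`, `w = x_β`, `B = X_β`, `N j i = ∇_j X^i_α`, and `r` collects the terms
`∂_α x_β - H x - D_β X_α`. -/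
def poissonTerm {n : ℕ} (g gi : Fin n → Fin n → ℝ) (G : Fin n → Fin n → Fin n → ℝ)
    (N : Fin n → Fin n → ℝ) (u w B r : Fin n → ℝ) (i : Fin n) : ℝ :=
  r i + (∑ j, ∑ k, G i j k * u j * w k)
    - (∑ h', ∑ k, ∑ j, gi i h' * g k j * N h' k * B j)
    - ∑ j, (N j i - ∑ h', ∑ k, g h' j * gi i k * N k h') * w j

/-- Lowering the index of `poissonTerm`; `Γ m j l` is the Christoffel symbol of the first kind,
`A = X_α` and `dX j i = ∂_j X^i_α`. -/
lemma lower_poissonTerm {n : ℕ} {g gi : Fin n → Fin n → ℝ} {G Γ : Fin n → Fin n → Fin n → ℝ}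
    {N dX : Fin n → Fin n → ℝ} {u w A B r : Fin n → ℝ}
    (gs : ∀ i j, g i j = g j i)
    (hinv : ∀ i j, ∑ l, g i l * gi l j = if i = j then 1 else 0)
    (hΓ : ∀ m j l, ∑ i, g m i * G i j l = Γ m j l)
    (hN : ∀ j i, N j i = dX j i + ∑ l, G i j l * A l) (m : Fin n) :
    ∑ i, g m i * poissonTerm g gi G N u w B r i
      = (∑ i, g m i * r i) + ∑ j, ∑ l, (Γ m j l * u j * w l
          + (g l j * dX m l + Γ j m l * A l) * (w j - B j)
          - (g m l * dX j l + Γ m j l * A l) * w j) := by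
  have cancel : ∀ v : Fin n → ℝ, ∑ i, g m i * ∑ h', gi i h' * v h' = v m := by
    intro v
    simp only [Finset.mul_sum]
    rw [Finset.sum_comm]
    simp only [← mul_assoc, ← Finset.sum_mul, hinv]
    simp
  have lowN : ∀ a j, ∑ i, g a i * N j i = ∑ l, (g a l * dX j l + Γ a j l * A l) := by
    intro a j
    simp only [hN, mul_add, Finset.sum_add_distrib, Finset.mul_sum]
    congr 1
    rw [Finset.sum_comm]
    simp only [← mul_assoc, ← Finset.sum_mul, hΓ]
  have t1 : ∑ i, g m i * ∑ j, ∑ k, G i j k * u j * w k = ∑ j, ∑ l, Γ m j l * u j * w l := by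
    simp only [Finset.mul_sum]
    rw [Finset.sum_comm]
    refine Finset.sum_congr rfl fun j _ => ?_
    rw [Finset.sum_comm]
    refine Finset.sum_congr rfl fun l _ => ?_
    rw [← hΓ, Finset.sum_mul, Finset.sum_mul]
    exact Finset.sum_congr rfl fun i _ => by ring
  have t2 : ∀ V : Fin n → ℝ, ∑ i, g m i * ∑ h', ∑ k, ∑ j, gi i h' * g k j * N h' k * V j
      = ∑ j, ∑ l, (g l j * dX m l + Γ j m l * A l) * V j := by
    intro V
    have : ∀ i, ∑ h', ∑ k, ∑ j, gi i h' * g k j * N h' k * V j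
        = ∑ h', gi i h' * ∑ j, (∑ k, g j k * N h' k) * V j := by
      intro i
      refine Finset.sum_congr rfl fun h' _ => ?_
      rw [Finset.sum_comm]
      simp only [Finset.mul_sum, Finset.sum_mul]
      refine Finset.sum_congr rfl fun j _ => Finset.sum_congr rfl fun k _ => ?_
      rw [gs k j]; ring
    simp only [this, cancel, lowN, Finset.sum_mul]
    refine Finset.sum_congr rfl fun j _ => Finset.sum_congr rfl fun k _ => ?_
    rw [gs j k]
  have t3 : ∑ i, g m i * ∑ j, N j i * w j
      = ∑ j, ∑ l, (g m l * dX j l + Γ m j l * A l) * w j := by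
    simp only [Finset.mul_sum]
    rw [Finset.sum_comm]
    refine Finset.sum_congr rfl fun j _ => ?_
    rw [← Finset.sum_mul, ← lowN, Finset.sum_mul]
    exact Finset.sum_congr rfl fun i _ => by ring
  have split : ∀ i, poissonTerm g gi G N u w B r i = r i + (∑ j, ∑ k, G i j k * u j * w k)
      - (∑ h', ∑ k, ∑ j, gi i h' * g k j * N h' k * B j) - (∑ j, N j i * w j)
      + ∑ h', ∑ k, ∑ j, gi i h' * g k j * N h' k * w j := by
    intro i
    have : ∑ j, (∑ h', ∑ k, g h' j * gi i k * N k h') * w j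
        = ∑ h', ∑ k, ∑ j, gi i h' * g k j * N h' k * w j := by
      simp only [Finset.sum_mul]
      rw [Finset.sum_congr rfl fun j _ => Finset.sum_comm, Finset.sum_comm]
      refine Finset.sum_congr rfl fun a _ => ?_
      rw [Finset.sum_comm]
      exact Finset.sum_congr rfl fun b _ => Finset.sum_congr rfl fun j _ => by ring
    simp only [poissonTerm, sub_mul, Finset.sum_sub_distrib, this]
    ring
  simp only [split, mul_add, mul_sub, Finset.sum_add_distrib, Finset.sum_sub_distrib, t1, t2, t3]
  ring

/-- The Euler–Lagrange expression for the index `k`, divided by `√|det h|` and before contraction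
with `h^{αβ}`; `u = x_α`, `w = x_β`, `A = X_α`, `B = X_β`, `dA j i = ∂_j X^i_α`, `dB j i = ∂_j X^i_β`,
`dg l i j = ∂_l g_{ij}`, and `r` collects `∂_α x_β - ∂_α X_β - H (x - X)`. -/
def elTerm {n : ℕ} (g : Fin n → Fin n → ℝ) (dg : Fin n → Fin n → Fin n → ℝ)
    (dA dB : Fin n → Fin n → ℝ) (u w A B r : Fin n → ℝ) (k : Fin n) : ℝ :=
  (∑ i, ∑ j, ((1 / 2) * (dg k i j * (u i - A i) * (w j - B j)
      - g i j * dA k i * (w j - B j) - g i j * (u i - A i) * dB k j)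
      - dg j k i * u j * (w i - B i) + g k i * dB j i * u j))
    - ∑ i, g k i * r i

/-- After symmetrization in `(α, β)` the Euler–Lagrange expression is minus the lowered Poisson
expression. Uses `Γ_{m,lj} + Γ_{j,ml} = ∂_l g_{mj}`. -/
lemma elTerm_symm {n : ℕ} {g gi : Fin n → Fin n → ℝ} {G Γ dg : Fin n → Fin n → Fin n → ℝ}
    {NA NB dA dB : Fin n → Fin n → ℝ} {u w A B rA rB sA sB : Fin n → ℝ}
    (gs : ∀ i j, g i j = g j i)
    (hinv : ∀ i j, ∑ l, g i l * gi l j = if i = j then 1 else 0)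
    (hΓ : ∀ m j l, ∑ i, g m i * G i j l = Γ m j l)
    (Γs : ∀ m j l, Γ m j l = Γ m l j)
    (hdg : ∀ l m j, dg l m j = Γ m l j + Γ j l m)
    (hNA : ∀ j i, NA j i = dA j i + ∑ l, G i j l * A l)
    (hNB : ∀ j i, NB j i = dB j i + ∑ l, G i j l * B l)
    (hr : ∀ i, rA i + rB i = sA i + sB i) (k : Fin n) :
    elTerm g dg dA dB u w A B rA k + elTerm g dg dB dA w u B A rB k
      = -((∑ i, g k i * poissonTerm g gi G NA u w B sA i)
        + ∑ i, g k i * poissonTerm g gi G NB w u A sB i) := by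
  rw [lower_poissonTerm gs hinv hΓ hNA, lower_poissonTerm gs hinv hΓ hNB]
  have hrs : (∑ i, g k i * rA i) + ∑ i, g k i * rB i
      = (∑ i, g k i * sA i) + ∑ i, g k i * sB i := by
    simp only [← Finset.sum_add_distrib, ← mul_add, hr]
  rw [elTerm, elTerm]
  have main : ∀ {P Q R T : Fin n → Fin n → ℝ} {a b c d : ℝ},
      (∑ i, ∑ j, (P i j + Q i j) = ∑ i, ∑ j, -(R i j + T i j)) → a + b = c + d →
      ((∑ i, ∑ j, P i j) - a) + ((∑ i, ∑ j, Q i j) - b)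
        = -((c + ∑ i, ∑ j, R i j) + (d + ∑ i, ∑ j, T i j)) := by
    intro P Q R T a b c d hh hab
    simp only [Finset.sum_add_distrib, Finset.sum_neg_distrib] at hh
    linear_combination hh - hab
  refine main (sum_symm fun j l => ?_) hrs
  simp only [hdg]
  rw [gs l j, Γs k l j, Γs j l k, Γs l j k]
  ring

/-! ### The Euler–Lagrange expression -/

section Lagrangian

variable {p n : ℕ}

/-- `∂L/∂x^k` for a quadratic Lagrangian in `v - X`, at fixed `t` and `v`. -/
lemma fderiv_lagrangian_pos {W : Fin p → Fin p → ℝ} {g : (Fin n → ℝ) → Fin n → Fin n → ℝ}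
    (gdiff : ∀ i j, Differentiable ℝ fun q => g q i j)
    {X : Fin n → Fin p → (Fin n → ℝ) → ℝ} (hX : ∀ i α, Differentiable ℝ (X i α))
    (v : Fin n → Fin p → ℝ) (S : ℝ) (q : Fin n → ℝ) (k : Fin n) :
    fderiv ℝ (fun q => (1 / 2) * (∑ α, ∑ β, ∑ i, ∑ j, W α β * g q i j
          * (v i α - X i α q) * (v j β - X j β q)) * S) q (Pi.single k 1)
      = S * ∑ α, ∑ β, W α β * ∑ i, ∑ j, (1 / 2) *
          (pd k (fun y => g y i j) q * (v i α - X i α q) * (v j β - X j β q)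
            - g q i j * pd k (X i α) q * (v j β - X j β q)
            - g q i j * (v i α - X i α q) * pd k (X j β) q) := by
  have hg : ∀ i j, HasDir (fun y => g y i j) q (Pi.single k 1) (pd k (fun y => g y i j) q) :=
    fun i j => HasDir.of_diff (gdiff i j q)
  have hy : ∀ i α, HasDir (fun q => v i α - X i α q) q (Pi.single k 1) (0 - pd k (X i α) q) :=
    fun i α => (HasDir.const _).sub (HasDir.of_diff (hX i α q))
  refine ((((HasDir.const (1 / 2)).mul (HasDir.sum fun α => HasDir.sum fun β => HasDir.sum fun i =>
    HasDir.sum fun j => (((HasDir.const (W α β)).mul (hg i j)).mul (hy i α)).mul (hy j β))).mul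
    (HasDir.const S)).2).trans ?_
  simp only [zero_mul, mul_zero, zero_add, add_zero, zero_sub]
  rw [mul_comm _ S]
  congr 1
  simp only [Finset.mul_sum]
  refine Finset.sum_congr rfl fun α _ => Finset.sum_congr rfl fun β _ =>
    Finset.sum_congr rfl fun i _ => Finset.sum_congr rfl fun j _ => ?_
  ring

/-- The momentum `∂L/∂x^k_α`. -/
lemma fderiv_lagrangian_vel {W : Fin p → Fin p → ℝ} (Ws : ∀ α β, W α β = W β α)
    {g : Fin n → Fin n → ℝ} (gs : ∀ i j, g i j = g j i)
    (A v : Fin n → Fin p → ℝ) (S : ℝ) (k : Fin n) (α : Fin p) :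
    fderiv ℝ (fun v : Fin n → Fin p → ℝ => (1 / 2) * (∑ α, ∑ β, ∑ i, ∑ j, W α β * g i j
          * (v i α - A i α) * (v j β - A j β)) * S) v (Pi.single k (Pi.single α 1))
      = ∑ β, ∑ j, S * W α β * g k j * (v j β - A j β) := by
  set w : Fin n → Fin p → ℝ := Pi.single k (Pi.single α 1) with hw
  have hwv : ∀ i a, w i a = if i = k then (if a = α then 1 else 0) else 0 := by
    intro i a
    by_cases hi : i = k
    · subst hi; simp [hw, Pi.single_apply]
    · simp [hw, hi]
  have hy : ∀ i a, HasDir (fun v : Fin n → Fin p → ℝ => v i a - A i a) v w (w i a - 0) := by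
    intro i a
    refine HasDir.sub ?_ (HasDir.const _)
    exact HasDir.of_hasFDerivAt (((ContinuousLinearMap.proj (R := ℝ) a).comp
      (ContinuousLinearMap.proj (R := ℝ) (φ := fun _ : Fin n => Fin p → ℝ) i)).hasFDerivAt)
  refine ((((HasDir.const (1 / 2)).mul (HasDir.sum fun α => HasDir.sum fun β => HasDir.sum fun i =>
    HasDir.sum fun j => ((HasDir.const (W α β * g i j)).mul (hy i α)).mul (hy j β))).mul
    (HasDir.const S)).2).trans ?_
  simp only [zero_mul, mul_zero, zero_add, add_zero, sub_zero]
  have e1 : ∑ a, ∑ b, ∑ i, ∑ j, W a b * g i j * w i a * (v j b - A j b)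
      = ∑ b, ∑ j, W α b * g k j * (v j b - A j b) := by
    rw [Finset.sum_eq_single α]
    · refine Finset.sum_congr rfl fun b _ => ?_
      rw [Finset.sum_eq_single k]
      · simp [hwv]
      · intro i _ hi; simp [hwv, hi]
      · simp
    · intro a _ ha; simp [hwv, ha]
    · simp
  have e2 : ∑ a, ∑ b, ∑ i, ∑ j, W a b * g i j * (v i a - A i a) * w j b
      = ∑ b, ∑ j, W α b * g k j * (v j b - A j b) := by
    rw [← e1, Finset.sum_comm]
    refine Finset.sum_congr rfl fun a _ => Finset.sum_congr rfl fun b _ => ?_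
    rw [Finset.sum_comm]
    refine Finset.sum_congr rfl fun i _ => Finset.sum_congr rfl fun j _ => ?_
    rw [Ws b a, gs j i]; ring
  simp only [Finset.sum_add_distrib, e1, e2]
  have e3 : ∑ β, ∑ j, S * W α β * g k j * (v j β - A j β)
      = S * ∑ b, ∑ j, W α b * g k j * (v j b - A j b) := by
    simp only [Finset.mul_sum]
    exact Finset.sum_congr rfl fun b _ => Finset.sum_congr rfl fun j _ => by ring
  rw [e3]; ring

/-- The total divergence `(d/dt^α)(∂L/∂x^k_α)` along the first jet of `x`. -/
lemma divergence_momentum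
    {h : (Fin p → ℝ) → Fin p → Fin p → ℝ}
    (hsymm : ∀ t α β, h t α β = h t β α)
    (hdiff : ∀ α β, Differentiable ℝ fun t => h t α β)
    (hdet : ∀ t, (Matrix.of (h t)).det ≠ 0)
    {g : (Fin n → ℝ) → Fin n → Fin n → ℝ}
    (gdiff : ∀ i j, Differentiable ℝ fun q => g q i j)
    {X : Fin n → Fin p → (Fin p → ℝ) → (Fin n → ℝ) → ℝ}
    (hX : ∀ i α, Differentiable ℝ fun z : (Fin p → ℝ) × (Fin n → ℝ) => X i α z.1 z.2)
    {x : (Fin p → ℝ) → Fin n → ℝ} (hx : Differentiable ℝ x)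
    (hjet : ∀ i α, Differentiable ℝ fun s => jet x s i α) (t : Fin p → ℝ) (k : Fin n) :
    ∑ α, pd α (fun s => ∑ β, ∑ j, sqrtDet h s * minv (h s) α β * g (x s) k j
        * (jet x s j β - X j β s (x s))) t
      = sqrtDet h t * ∑ α, ∑ β, minv (h t) α β *
        ((∑ i, ∑ j, (pd j (fun y => g y k i) (x t) * jet x t j α
            * (jet x t i β - X i β t (x t))
            - g (x t) k i * pd j (fun y => X i β t y) (x t) * jet x t j α))
          + ∑ i, g (x t) k i * (pd α (fun s => jet x s i β) t - pd α (fun s => X i β s (x t)) t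
            - ∑ γ, christoffel h γ α β t * (jet x t i γ - X i γ t (x t)))) := by
  have hM : ∀ α β, HasDir (fun s => sqrtDet h s * minv (h s) α β) t (Pi.single α 1)
      (pd α (fun s => sqrtDet h s * minv (h s) α β) t) := fun α β =>
    HasDir.of_diff
      ((hasDir_sqrtDet (fun a b => HasDir.of_diff (w := 0) (hdiff a b t)) (hdet t)).1.mul
        (differentiableAt_minv (fun a b => hdiff a b t) (hdet t) α β))
  have hG : ∀ α j, HasDir (fun s => g (x s) k j) t (Pi.single α 1)
      (∑ l, pd l (fun y => g y k j) (x t) * jet x t l α) := by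
    intro α j
    have := hasDir_graph (F := fun _ y => g y k j) (t := t) (w := Pi.single α 1)
      ((gdiff k j).comp differentiable_snd) hx
    refine this.congr_val ?_
    simp [jet, pd]
  have hY : ∀ α j β, HasDir (fun s => jet x s j β - X j β s (x s)) t (Pi.single α 1)
      (pd α (fun s => jet x s j β) t - (pd α (fun s => X j β s (x t)) t
        + ∑ l, pd l (fun y => X j β t y) (x t) * jet x t l α)) := fun α j β =>
    (HasDir.of_diff (hjet j β t)).sub (hasDir_graph (hX j β) hx)
  have hval : ∀ α, pd α (fun s => ∑ β, ∑ j, sqrtDet h s * minv (h s) α β * g (x s) k j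
        * (jet x s j β - X j β s (x s))) t = _ := fun α =>
    (HasDir.sum fun β => HasDir.sum fun j => ((hM α β).mul (hG α j)).mul (hY α j β)).2
  set S := sqrtDet h t with hS
  set W := minv (h t) with hW
  set y : Fin n → Fin p → ℝ := fun i β => jet x t i β - X i β t (x t) with hy
  have hy' : ∀ i β, jet x t i β - X i β t (x t) = y i β := fun _ _ => rfl
  simp only [hy'] at hval ⊢
  -- the part where the density `√|det h| h^{αβ}` is differentiated
  have hdens : ∑ α, ∑ β, ∑ j, pd α (fun s => sqrtDet h s * minv (h s) α β) t * g (x t) k j * y j β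
      = -(S * ∑ α, ∑ β, W α β * ∑ i, g (x t) k i * ∑ γ, christoffel h γ α β t * y i γ) := by
    rw [Finset.sum_comm]
    have e1 : ∀ β, ∑ α, ∑ j, pd α (fun s => sqrtDet h s * minv (h s) α β) t * g (x t) k j * y j β
        = -(S * ∑ α, ∑ γ, W α γ * christoffel h β α γ t) * ∑ j, g (x t) k j * y j β := by
      intro β
      rw [← divergence_density hsymm hdiff hdet t β, Finset.sum_mul]
      refine Finset.sum_congr rfl fun α _ => ?_
      rw [Finset.mul_sum]
      exact Finset.sum_congr rfl fun j _ => by ring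
    simp only [e1]
    simp only [neg_mul, Finset.sum_neg_distrib, mul_assoc S, ← Finset.mul_sum]
    congr 2
    have e2 : ∀ α β, W α β * ∑ i, g (x t) k i * ∑ γ, christoffel h γ α β t * y i γ
        = ∑ γ, W α β * christoffel h γ α β t * ∑ i, g (x t) k i * y i γ := by
      intro α β
      simp only [Finset.mul_sum]
      rw [Finset.sum_comm]
      exact Finset.sum_congr rfl fun γ _ => Finset.sum_congr rfl fun i _ => by ring
    simp only [e2]
    simp only [Finset.sum_mul]
    rw [Finset.sum_comm]
    exact Finset.sum_congr rfl fun α _ => Finset.sum_comm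
  have hrest : ∑ α, ∑ β, ∑ j, (S * W α β * (∑ l, pd l (fun y => g y k j) (x t) * jet x t l α)
        * y j β + S * W α β * g (x t) k j * (pd α (fun s => jet x s j β) t
          - (pd α (fun s => X j β s (x t)) t
            + ∑ l, pd l (fun y => X j β t y) (x t) * jet x t l α)))
      = S * ∑ α, ∑ β, W α β * ((∑ i, ∑ j, (pd j (fun y => g y k i) (x t) * jet x t j α * y i β
            - g (x t) k i * pd j (fun y => X i β t y) (x t) * jet x t j α))
          + ∑ i, g (x t) k i * (pd α (fun s => jet x s i β) t
            - pd α (fun s => X i β s (x t)) t)) := by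
    simp only [Finset.mul_sum (s := Finset.univ) (a := S)]
    refine Finset.sum_congr rfl fun α _ => Finset.sum_congr rfl fun β _ => ?_
    rw [← Finset.sum_add_distrib, Finset.mul_sum, Finset.mul_sum]
    refine Finset.sum_congr rfl fun i _ => ?_
    rw [Finset.sum_sub_distrib, ← Finset.sum_mul]
    simp only [mul_assoc (g (x t) k i), ← Finset.mul_sum]
    ring
  rw [Finset.sum_congr rfl fun α _ => hval α]
  have e4 := congrArg₂ (· + ·) hdens hrest
  refine Eq.trans ?_ (e4.trans ?_)
  · simp only [← Finset.sum_add_distrib]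
    refine Finset.sum_congr rfl fun α _ => Finset.sum_congr rfl fun β _ =>
      Finset.sum_congr rfl fun j _ => ?_
    ring
  · rw [neg_add_eq_sub, ← mul_sub, ← Finset.sum_sub_distrib]
    congr 1
    refine Finset.sum_congr rfl fun α _ => ?_
    rw [← Finset.sum_sub_distrib]
    refine Finset.sum_congr rfl fun β _ => ?_
    rw [← mul_sub]
    congr 1
    simp only [mul_sub (g _ _ _), Finset.sum_sub_distrib]
    ring

end Lagrangian

/-- Lowering an index of the Christoffel symbol gives the Christoffel symbol of the first kind. -/
lemma lower_christoffel {n : ℕ} {g : (Fin n → ℝ) → Fin n → Fin n → ℝ} {q : Fin n → ℝ}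
    (gdet : (Matrix.of (g q)).det ≠ 0) (m j k : Fin n) :
    ∑ i, g q m i * christoffel g i j k q
      = (1 / 2) * (pd k (fun y => g y m j) q + pd j (fun y => g y m k) q
        - pd m (fun y => g y j k) q) := by
  have : ∀ i, g q m i * christoffel g i j k q = ∑ l, g q m i * minv (g q) i l *
      ((1 / 2) * (pd k (fun y => g y l j) q + pd j (fun y => g y l k) q
        - pd l (fun y => g y j k) q)) := by
    intro i
    simp only [christoffel, Finset.mul_sum]
    exact Finset.sum_congr rfl fun l _ => by ring
  simp only [this]
  rw [Finset.sum_comm]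
  simp only [← Finset.sum_mul, mul_minv gdet]
  simp

/-- extremals of `L = ½ h^{αβ} g_{ij} (x^i_α − X^i_α)(x^j_β − X^j_β)√|det h|`
are exactly the solutions of the generalized Poisson system (11). -/
theorem extremal_iff_poisson_system
    {p n : ℕ} (hp : 0 < p) (hn : 0 < n)
    (h : (Fin p → ℝ) → Fin p → Fin p → ℝ)
    (hsymm : ∀ t α β, h t α β = h t β α)
    (hsmooth : ∀ α β, ContDiff ℝ (⊤ : ℕ∞) fun t => h t α β)
    (hdet : ∀ t, (Matrix.of (h t)).det ≠ 0)
    (g : (Fin n → ℝ) → Fin n → Fin n → ℝ)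
    (gsymm : ∀ q i j, g q i j = g q j i)
    (gsmooth : ∀ i j, ContDiff ℝ (⊤ : ℕ∞) fun q => g q i j)
    (gdet : ∀ q, (Matrix.of (g q)).det ≠ 0)
    (X : Fin n → Fin p → (Fin p → ℝ) → (Fin n → ℝ) → ℝ)
    (Xsmooth : ∀ i α, ContDiff ℝ (⊤ : ℕ∞) fun z : (Fin p → ℝ) × (Fin n → ℝ) => X i α z.1 z.2)
    (x : (Fin p → ℝ) → Fin n → ℝ) (hx : ContDiff ℝ (⊤ : ℕ∞) x) :
    IsExtremal
      (fun t q v =>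
        (1 / 2) * (∑ α, ∑ β, ∑ i, ∑ j, minv (h t) α β * g q i j
          * (v i α - X i α t q) * (v j β - X j β t q)) * sqrtDet h t) x
      ↔ ∀ (t : Fin p → ℝ) (i : Fin n),
          ∑ α, ∑ β, minv (h t) α β * covHess h g x i α β t
            = (∑ h', ∑ α, ∑ β, ∑ k, ∑ j, minv (g (x t)) i h' * minv (h t) α β
                * g (x t) k j * nablaX g X h' k α t (x t) * X j β t (x t))
              + (∑ α, ∑ β, ∑ j, minv (h t) α β * Fext g X j i α t (x t) * jet x t j β)
              + (∑ α, ∑ β, minv (h t) α β * Dt h X β i α t (x t)) := by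
  have hdiff : ∀ α β, Differentiable ℝ fun t => h t α β := fun α β =>
    (hsmooth α β).differentiable (by simp)
  have gdiff : ∀ i j, Differentiable ℝ fun q => g q i j := fun i j =>
    (gsmooth i j).differentiable (by simp)
  have Xdiff : ∀ i α, Differentiable ℝ fun z : (Fin p → ℝ) × (Fin n → ℝ) => X i α z.1 z.2 :=
    fun i α => (Xsmooth i α).differentiable (by simp)
  have Xdiff' : ∀ t i α, Differentiable ℝ fun q => X i α t q := fun t i α =>
    (Xdiff i α).comp ((differentiable_const t).prodMk differentiable_id)
  have xdiff : Differentiable ℝ x := hx.differentiable (by simp)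
  have jdiff : ∀ i α, Differentiable ℝ fun s => jet x s i α := by
    intro i α
    have h1 : ContDiff ℝ (⊤ : ℕ∞) fun s => x s i := contDiff_pi.1 hx i
    have h2 : ContDiff ℝ 1 (fderiv ℝ fun s => x s i) := h1.fderiv_right (by norm_cast)
    exact (h2.differentiable (by simp)).clm_apply (differentiable_const _)
  have hW : ∀ t α β, minv (h t) α β = minv (h t) β α := fun t => minv_symm (hsymm t)
  -- `P t i` is the left-hand side minus the right-hand side of the Poisson system
  set P : (Fin p → ℝ) → Fin n → ℝ := fun t i => ∑ α, ∑ β, minv (h t) α β *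
    poissonTerm (g (x t)) (minv (g (x t))) (fun i j k => christoffel g i j k (x t))
      (fun j i => nablaX g X j i α t (x t)) (fun i => jet x t i α) (fun i => jet x t i β)
      (fun i => X i β t (x t))
      (fun i => pd α (fun s => jet x s i β) t - (∑ γ, christoffel h γ α β t * jet x t i γ)
        - Dt h X β i α t (x t)) i with hP
  have hPeq : ∀ t i, P t i = (∑ α, ∑ β, minv (h t) α β * covHess h g x i α β t)
      - ((∑ h', ∑ α, ∑ β, ∑ k, ∑ j, minv (g (x t)) i h' * minv (h t) α β
                * g (x t) k j * nablaX g X h' k α t (x t) * X j β t (x t))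
              + (∑ α, ∑ β, ∑ j, minv (h t) α β * Fext g X j i α t (x t) * jet x t j β)
              + (∑ α, ∑ β, minv (h t) α β * Dt h X β i α t (x t))) := by
    intro t i
    have e1 : ∑ h', ∑ α, ∑ β, ∑ k, ∑ j, minv (g (x t)) i h' * minv (h t) α β
          * g (x t) k j * nablaX g X h' k α t (x t) * X j β t (x t)
        = ∑ α, ∑ β, minv (h t) α β * ∑ h', ∑ k, ∑ j, minv (g (x t)) i h'
          * g (x t) k j * nablaX g X h' k α t (x t) * X j β t (x t) := by
      rw [Finset.sum_comm]
      refine Finset.sum_congr rfl fun α _ => ?_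
      rw [Finset.sum_comm]
      refine Finset.sum_congr rfl fun β _ => ?_
      simp only [Finset.mul_sum]
      exact Finset.sum_congr rfl fun _ _ => Finset.sum_congr rfl fun _ _ =>
        Finset.sum_congr rfl fun _ _ => by ring
    rw [e1]
    simp only [hP, ← Finset.sum_add_distrib, ← Finset.sum_sub_distrib]
    refine Finset.sum_congr rfl fun α _ => Finset.sum_congr rfl fun β _ => ?_
    simp only [poissonTerm, covHess, Fext, mul_assoc (minv (h t) α β), ← Finset.mul_sum]
    ring
  have hEL : ∀ t k, fderiv ℝ (fun q => (1 / 2) * (∑ α, ∑ β, ∑ i, ∑ j, minv (h t) α β * g q i j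
          * (jet x t i α - X i α t q) * (jet x t j β - X j β t q)) * sqrtDet h t) (x t)
          (Pi.single k 1)
      - (∑ α, pd α (fun s => fderiv ℝ (fun v : Fin n → Fin p → ℝ =>
          (1 / 2) * (∑ α, ∑ β, ∑ i, ∑ j, minv (h s) α β * g (x s) i j
          * (v i α - X i α s (x s)) * (v j β - X j β s (x s))) * sqrtDet h s) (jet x s)
            (Pi.single k (Pi.single α 1))) t)
      = -(sqrtDet h t * ∑ i, g (x t) k i * P t i) := by
    intro t k
    rw [fderiv_lagrangian_pos (W := minv (h t)) gdiff (X := fun i α q => X i α t q) (Xdiff' t)]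
    have hmom : ∀ α s, fderiv ℝ (fun v : Fin n → Fin p → ℝ =>
          (1 / 2) * (∑ α, ∑ β, ∑ i, ∑ j, minv (h s) α β * g (x s) i j
          * (v i α - X i α s (x s)) * (v j β - X j β s (x s))) * sqrtDet h s) (jet x s)
            (Pi.single k (Pi.single α 1))
        = ∑ β, ∑ j, sqrtDet h s * minv (h s) α β * g (x s) k j
        * (jet x s j β - X j β s (x s)) := fun α s =>
      fderiv_lagrangian_vel (hW s) (gsymm (x s)) (fun i α => X i α s (x s)) (jet x s) _ k α
    simp only [hmom]
    rw [divergence_momentum hsymm hdiff hdet gdiff Xdiff xdiff jdiff, ← mul_sub, ← mul_neg]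
    congr 1
    have hlow : ∑ i, g (x t) k i * P t i = ∑ α, ∑ β, minv (h t) α β * ∑ i, g (x t) k i *
        poissonTerm (g (x t)) (minv (g (x t))) (fun i j k => christoffel g i j k (x t))
        (fun j i => nablaX g X j i α t (x t)) (fun i => jet x t i α) (fun i => jet x t i β)
        (fun i => X i β t (x t))
        (fun i => pd α (fun s => jet x s i β) t - (∑ γ, christoffel h γ α β t * jet x t i γ)
          - Dt h X β i α t (x t)) i := by
      simp only [hP, Finset.mul_sum]
      rw [Finset.sum_comm]
      refine Finset.sum_congr rfl fun α _ => ?_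
      rw [Finset.sum_comm]
      exact Finset.sum_congr rfl fun β _ => Finset.sum_congr rfl fun i _ => by ring
    rw [hlow]
    have hel : (∑ α, ∑ β, minv (h t) α β * ∑ i, ∑ j, (1 / 2) *
          (pd k (fun y => g y i j) (x t) * (jet x t i α - X i α t (x t))
              * (jet x t j β - X j β t (x t))
            - g (x t) i j * pd k (fun q => X i α t q) (x t) * (jet x t j β - X j β t (x t))
            - g (x t) i j * (jet x t i α - X i α t (x t)) * pd k (fun q => X j β t q) (x t)))
        - (∑ α, ∑ β, minv (h t) α β *
          ((∑ i, ∑ j, (pd j (fun y => g y k i) (x t) * jet x t j α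
              * (jet x t i β - X i β t (x t))
              - g (x t) k i * pd j (fun y => X i β t y) (x t) * jet x t j α))
            + ∑ i, g (x t) k i * (pd α (fun s => jet x s i β) t - pd α (fun s => X i β s (x t)) t
              - ∑ γ, christoffel h γ α β t * (jet x t i γ - X i γ t (x t)))))
        = ∑ α, ∑ β, minv (h t) α β * elTerm (g (x t)) (fun l i j => pd l (fun y => g y i j) (x t))
          (fun j i => pd j (fun q => X i α t q) (x t)) (fun j i => pd j (fun q => X i β t q) (x t))
          (fun i => jet x t i α) (fun i => jet x t i β) (fun i => X i α t (x t))
          (fun i => X i β t (x t))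
          (fun i => pd α (fun s => jet x s i β) t - pd α (fun s => X i β s (x t)) t
              - ∑ γ, christoffel h γ α β t * (jet x t i γ - X i γ t (x t))) k := by
      simp only [← Finset.sum_sub_distrib, ← mul_sub]
      refine Finset.sum_congr rfl fun α _ => Finset.sum_congr rfl fun β _ => ?_
      congr 1
      rw [elTerm, ← sub_sub]
      congr 1
      simp only [← Finset.sum_sub_distrib]
      exact Finset.sum_congr rfl fun i _ => Finset.sum_congr rfl fun j _ => by ring
    refine hel.trans ?_
    simp only [← Finset.sum_neg_distrib, ← mul_neg]
    refine sum_symm fun α β => ?_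
    rw [hW t β α, ← mul_add, ← mul_add]
    congr 1
    have gd : ∀ l i j, pd l (fun y => g y i j) (x t) = pd l (fun y => g y j i) (x t) :=
      fun l i j => by
        congr 1
        exact funext fun y => gsymm y i j
    rw [elTerm_symm (gi := minv (g (x t))) (G := fun i j k => christoffel g i j k (x t))
      (Γ := fun m j k => (1 / 2) * (pd k (fun y => g y m j) (x t) + pd j (fun y => g y m k) (x t)
        - pd m (fun y => g y j k) (x t)))
      (NA := fun j i => nablaX g X j i α t (x t)) (NB := fun j i => nablaX g X j i β t (x t))
      (sA := fun i => pd α (fun s => jet x s i β) t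
          - (∑ γ, christoffel h γ α β t * jet x t i γ) - Dt h X β i α t (x t))
      (sB := fun i => pd β (fun s => jet x s i α) t
          - (∑ γ, christoffel h γ β α t * jet x t i γ) - Dt h X α i β t (x t))
      (gsymm (x t)) (mul_minv (gdet (x t))) (fun m j l => lower_christoffel (gdet (x t)) m j l)]
    · simp only [mul_neg, Finset.sum_neg_distrib]
      ring
    · intro m j l
      rw [gd m j l]; ring
    · intro l m j
      rw [gd l j m, gd m j l, gd j l m]; ring
    · intro j i
      rfl
    · intro j i
      rfl
    · intro i
      simp only [Dt, mul_sub, Finset.sum_sub_distrib, christoffel_symm hsymm _ β α]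
      ring
  have hS : ∀ t, sqrtDet h t ≠ 0 := fun t =>
    (Real.sqrt_pos.2 (abs_pos.2 (hdet t))).ne'
  constructor
  · intro hext t i
    have h0 : ∀ k, ∑ i, g (x t) k i * P t i = 0 := by
      intro k
      have h1 := hext t k
      rw [hEL t k] at h1
      exact (mul_eq_zero.1 (neg_eq_zero.1 h1)).resolve_left (hS t)
    -- invert `g`
    have h2 : P t i = ∑ k, minv (g (x t)) i k * ∑ j, g (x t) k j * P t j := by
      simp only [Finset.mul_sum]
      rw [Finset.sum_comm]
      simp only [← mul_assoc, ← Finset.sum_mul, minv_mul (gdet (x t))]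
      simp
    simp only [h0, mul_zero, Finset.sum_const_zero] at h2
    rw [hPeq] at h2
    exact sub_eq_zero.1 h2
  · intro hpoi t k
    have h0 : ∀ i, P t i = 0 := fun i => by rw [hPeq]; exact sub_eq_zero.2 (hpoi t i)
    refine (hEL t k).trans ?_
    simp [h0]
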